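/- arXiv:1208.4584 — 2 statements merged into one kernel-verified Lean document; each statement's English description precedes it below -/
import Mathlib

section
/- Let f ∈ ℂ[x,y] be a polynomial in two variables which is non-degenerate at infinity and satisfies dim Γ_∞(f) = 2. Then there is no decomposition f(x,y) = ĥ(g(x,y)) with a one-variable polynomial ĥ ∈ ℂ[t] of degree ≥ 2 and a polynomial g ∈ ℂ[x,y]. -/
open scoped Classical

noncomputable section

/-- Dot product on `ℝⁿ`. -/
def dotR {n : ℕ} (u v : Fin n → ℝ) : ℝ := ∑ i, u i * v i

/-- The image in `ℝⁿ` of the support of a polynomial. -/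
def realSupp {n : ℕ} (f : MvPolynomial (Fin n) ℂ) : Set (Fin n → ℝ) :=
  (fun v : Fin n →₀ ℕ => fun i => (v i : ℝ)) '' {v | MvPolynomial.coeff v f ≠ 0}

/-- The Newton polyhedron at infinity `Γ_∞(f)`. -/
def NPinf {n : ℕ} (f : MvPolynomial (Fin n) ℂ) : Set (Fin n → ℝ) :=
  convexHull ℝ ({0} ∪ realSupp f)

/-- The supporting face `γ_u` of `u` in `Γ_∞(f)`. -/
def suppFace {n : ℕ} (f : MvPolynomial (Fin n) ℂ) (u : Fin n → ℝ) : Set (Fin n → ℝ) :=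
  {v ∈ NPinf f | ∀ w ∈ NPinf f, dotR u v ≤ dotR u w}

/-- A face of `Γ_∞(f)` is any set of the form `γ_u`. -/
def IsFaceOf {n : ℕ} (f : MvPolynomial (Fin n) ℂ) (γ : Set (Fin n → ℝ)) : Prop :=
  ∃ u : Fin n → ℝ, γ = suppFace f u

/-- Dimension of a subset of `ℝⁿ`: the dimension of its affine span. -/
def setDim {n : ℕ} (s : Set (Fin n → ℝ)) : ℕ :=
  Module.finrank ℝ (affineSpan ℝ s).direction

/-- A face `γ` of `Γ_∞(f)` with `0 ∈ γ` is atypical if some facet of `Γ_∞(f)`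
containing `γ` has all its nonzero inner conormal vectors outside `ℝ_{≥0}ⁿ`. -/
def IsAtypicalFace {n : ℕ} (f : MvPolynomial (Fin n) ℂ) (γ : Set (Fin n → ℝ)) : Prop :=
  IsFaceOf f γ ∧ (0 : Fin n → ℝ) ∈ γ ∧
    ∃ Γf : Set (Fin n → ℝ), IsFaceOf f Γf ∧ setDim Γf = n - 1 ∧ γ ⊆ Γf ∧
      ∀ u : Fin n → ℝ, u ≠ 0 → suppFace f u = Γf → ¬ (∀ i, 0 ≤ u i)

/-- The cone `σ(γ)` of the dual fan of `Γ_∞(f)` corresponding to the face `γ`. -/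
def sigmaCone {n : ℕ} (f : MvPolynomial (Fin n) ℂ) (γ : Set (Fin n → ℝ)) : Set (Fin n → ℝ) :=
  closure {u : Fin n → ℝ | suppFace f u = γ}

/-- The coordinate subspace `ℝ^S` of `ℝⁿ`. -/
def coordSub {n : ℕ} (S : Finset (Fin n)) : Set (Fin n → ℝ) :=
  {v | ∀ i ∉ S, v i = 0}

/-- The `γ`-part `f_γ` of `f`. -/
def facePart {n : ℕ} (f : MvPolynomial (Fin n) ℂ) (γ : Set (Fin n → ℝ)) :
    MvPolynomial (Fin n) ℂ :=
  ∑ v ∈ f.support,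
    if (fun i => (v i : ℝ)) ∈ γ then MvPolynomial.monomial v (MvPolynomial.coeff v f) else 0

/-- `f` is non-degenerate at infinity. -/
def NondegAtInfty {n : ℕ} (f : MvPolynomial (Fin n) ℂ) : Prop :=
  ∀ γ : Set (Fin n → ℝ), IsFaceOf f γ → (0 : Fin n → ℝ) ∉ γ →
    ∀ x : Fin n → ℂ, (∀ i, x i ≠ 0) → MvPolynomial.eval x (facePart f γ) = 0 →
      ∃ i, MvPolynomial.eval x (MvPolynomial.pderiv i (facePart f γ)) ≠ 0

/-- `Δ_γ`: the convex hull of `{0} ∪ γ`. -/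
def DeltaG {n : ℕ} (γ : Set (Fin n → ℝ)) : Set (Fin n → ℝ) :=
  convexHull ℝ ({0} ∪ γ)

/-- The lattice `M_γ = ℤⁿ ∩ L(Δ_γ)`. -/
def Mgamma {n : ℕ} (γ : Set (Fin n → ℝ)) : AddSubgroup (Fin n → ℤ) where
  carrier := {v | (fun i => (v i : ℝ)) ∈ Submodule.span ℝ (DeltaG γ)}
  add_mem' := by
    intro a b ha hb
    have h : (fun i => (((a + b) : Fin n → ℤ) i : ℝ))
        = (fun i => (a i : ℝ)) + fun i => (b i : ℝ) := by
      funext i; push_cast [Pi.add_apply]; ring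
    simp only [Set.mem_setOf_eq, h]
    exact Submodule.add_mem _ ha hb
  zero_mem' := by
    have h : (fun i => (((0 : Fin n → ℤ)) i : ℝ)) = (0 : Fin n → ℝ) := by
      funext i; simp
    simp only [Set.mem_setOf_eq, h]
    exact Submodule.zero_mem _
  neg_mem' := by
    intro a ha
    have h : (fun i => (((-a) : Fin n → ℤ) i : ℝ)) = -(fun i => (a i : ℝ)) := by
      funext i; push_cast [Pi.neg_apply]; ring
    simp only [Set.mem_setOf_eq, h]
    exact Submodule.neg_mem _ ha

/-!
Some linear weight attains its maximum over `Γ_∞(f)` at two distinct exponents of `f`, and this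
maximum is positive. If `f = ĥ(g)`, the part of `f` of maximal weight is `c * G ^ deg ĥ`, where `G`
is the corresponding part of `g`. As this power has two distinct monomials, `G` is not a monomial,
so by the Nullstellensatz it vanishes somewhere on the torus; since `deg ĥ ≥ 2`, every zero of `G`
is a singular zero of `c * G ^ deg ĥ`.
-/

section WeightFiltration

open MvPolynomial
open Finsupp (weight)
open scoped Pointwise

section Preorder

variable {R M σ : Type*} [CommSemiring R] [AddCommMonoid M] [Preorder M] {w : σ → M} {μ ν : M}
  {P Q : MvPolynomial σ R}

variable (R) in
/-- The weight filtration: the module of polynomials all of whose monomials have `w`-weight at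
most `μ`. The zero polynomial belongs to each of these modules. -/
def weightLE (w : σ → M) (μ : M) : Submodule R (MvPolynomial σ R) :=
  restrictSupport R {d | weight w d ≤ μ}

lemma mem_weightLE : P ∈ weightLE R w μ ↔ ∀ d ∈ P.support, weight w d ≤ μ :=
  Iff.rfl

lemma weightLE_mono (h : μ ≤ ν) : weightLE R w μ ≤ weightLE R w ν :=
  restrictSupport_mono R fun _ hd => le_trans hd h

lemma mul_mem_weightLE [IsOrderedAddMonoid M] (hP : P ∈ weightLE R w μ)
    (hQ : Q ∈ weightLE R w ν) : P * Q ∈ weightLE R w (μ + ν) := by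
  have hadd : {d : σ →₀ ℕ | weight w d ≤ μ} + {d | weight w d ≤ ν} ⊆ {d | weight w d ≤ μ + ν} :=
    Set.add_subset_iff.2 fun a ha b hb =>
      (map_add (weight w) a b).trans_le (add_le_add ha hb)
  exact restrictSupport_mono R hadd (restrictSupport_add R _ _ ▸ Submodule.mul_mem_mul hP hQ)

lemma one_mem_weightLE : (1 : MvPolynomial σ R) ∈ weightLE R w 0 :=
  (monomial_mem_restrictSupport R).2 (.inl (map_zero (weight w)).le)

lemma pow_mem_weightLE [IsOrderedAddMonoid M] (hP : P ∈ weightLE R w μ) (k : ℕ) :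
    P ^ k ∈ weightLE R w (k • μ) := by
  induction k with
  | zero => simpa only [pow_zero, zero_nsmul] using one_mem_weightLE
  | succ k ih => simpa only [pow_succ, succ_nsmul] using mul_mem_weightLE ih hP

lemma aeval_mem_weightLE [IsOrderedAddMonoid M] (hμ : 0 ≤ μ) (hP : P ∈ weightLE R w μ)
    (h : Polynomial R) : Polynomial.aeval P h ∈ weightLE R w (h.natDegree • μ) := by
  rw [Polynomial.aeval_eq_sum_range]
  refine Submodule.sum_mem _ fun k hk => Submodule.smul_mem _ _ ?_
  have hk : k ≤ h.natDegree := Finset.mem_range_succ_iff.1 hk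
  exact weightLE_mono (nsmul_le_nsmul_left hμ hk) (pow_mem_weightLE hP k)

lemma le_of_weightedHomogeneousComponent_ne_zero (hP : P ∈ weightLE R w μ)
    (h : weightedHomogeneousComponent w ν P ≠ 0) : ν ≤ μ := by
  contrapose! h
  refine weightedHomogeneousComponent_eq_zero' ν P ?_
  rintro d hd rfl
  exact h (hP hd)

end Preorder

section PartialOrder

variable {R M σ : Type*} [CommSemiring R] [AddCommMonoid M] [PartialOrder M]
  [IsOrderedCancelAddMonoid M] {w : σ → M} {μ ν : M} {P Q : MvPolynomial σ R}

lemma weightedHomogeneousComponent_mul (hP : P ∈ weightLE R w μ) (hQ : Q ∈ weightLE R w ν) :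
    weightedHomogeneousComponent w (μ + ν) (P * Q) =
      weightedHomogeneousComponent w μ P * weightedHomogeneousComponent w ν Q := by
  ext d
  rw [coeff_weightedHomogeneousComponent, coeff_mul, coeff_mul, Finset.ite_sum_zero]
  refine Finset.sum_congr rfl fun ⟨a, b⟩ hab => ?_
  obtain rfl : a + b = d := Finset.HasAntidiagonal.mem_antidiagonal.1 hab
  by_cases ha : coeff a P = 0
  · simp [ha, coeff_weightedHomogeneousComponent]
  by_cases hb : coeff b Q = 0
  · simp [hb, coeff_weightedHomogeneousComponent]
  have weight_eq_iff : weight w (a + b) = μ + ν ↔ weight w a = μ ∧ weight w b = ν := by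
    rw [map_add]
    exact add_eq_add_iff_eq_and_eq (hP (mem_support_iff.2 ha)) (hQ (mem_support_iff.2 hb))
  simp only [coeff_weightedHomogeneousComponent, weight_eq_iff, ite_zero_mul_ite_zero]

lemma weightedHomogeneousComponent_pow (hP : P ∈ weightLE R w μ) (k : ℕ) :
    weightedHomogeneousComponent w (k • μ) (P ^ k) =
      weightedHomogeneousComponent w μ P ^ k := by
  induction k with
  | zero =>
    simpa only [pow_zero, zero_nsmul] using
      (isWeightedHomogeneous_one R w).weightedHomogeneousComponent_same
  | succ k ih =>
    rw [pow_succ, succ_nsmul, weightedHomogeneousComponent_mul (pow_mem_weightLE hP k) hP, ih,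
      pow_succ]

lemma weightedHomogeneousComponent_aeval (hμ : 0 < μ) (hP : P ∈ weightLE R w μ)
    (h : Polynomial R) :
    weightedHomogeneousComponent w (h.natDegree • μ) (Polynomial.aeval P h) =
      C h.leadingCoeff * weightedHomogeneousComponent w μ P ^ h.natDegree := by
  have lower_eq_zero : ∀ k ∈ Finset.range h.natDegree,
      weightedHomogeneousComponent w (h.natDegree • μ) (h.coeff k • P ^ k) = 0 := by
    intro k hk
    by_contra hne
    exact (nsmul_lt_nsmul_left hμ (Finset.mem_range.1 hk)).not_ge
      (le_of_weightedHomogeneousComponent_ne_zero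
        (Submodule.smul_mem _ _ (pow_mem_weightLE hP k)) hne)
  rw [Polynomial.aeval_eq_sum_range, map_sum, Finset.sum_range_succ,
    Finset.sum_eq_zero lower_eq_zero, zero_add, map_smul, weightedHomogeneousComponent_pow hP,
    C_mul', Polynomial.leadingCoeff]

end PartialOrder

section LinearOrder

variable {R M σ : Type*} [CommSemiring R] [AddCommMonoid M] [LinearOrder M] {w : σ → M}

lemma exists_mem_weightLE_and_component_ne_zero (w : σ → M) {P : MvPolynomial σ R} (hP : P ≠ 0) :
    ∃ μ, P ∈ weightLE R w μ ∧ weightedHomogeneousComponent w μ P ≠ 0 := by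
  obtain ⟨a, ha, hmax⟩ := P.support.exists_max_image (weight w) (support_nonempty.2 hP)
  refine ⟨weight w a, mem_weightLE.2 hmax, ne_zero_iff.2 ⟨a, ?_⟩⟩
  rwa [coeff_weightedHomogeneousComponent, if_pos rfl, ← mem_support_iff]

theorem exists_weightedHomogeneousComponent_aeval_eq_C_mul_pow [IsOrderedCancelAddMonoid M]
    [NoZeroDivisors R] {h : Polynomial R} {g : MvPolynomial σ R} {m : M} (hm : 0 < m)
    (hle : Polynomial.aeval g h ∈ weightLE R w m)
    (hne : weightedHomogeneousComponent w m (Polynomial.aeval g h) ≠ 0) :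
    ∃ G, weightedHomogeneousComponent w m (Polynomial.aeval g h) =
      C h.leadingCoeff * G ^ h.natDegree := by
  have hg_zero : g ∉ weightLE R w 0 := fun hg => hm.not_ge <| by
    simpa only [nsmul_zero] using
      le_of_weightedHomogeneousComponent_ne_zero (aeval_mem_weightLE le_rfl hg h) hne
  have hg : g ≠ 0 := fun hg => hg_zero (hg ▸ zero_mem _)
  have hh : h ≠ 0 := by rintro rfl; simp at hne
  obtain ⟨μ, hgμ, hG⟩ := exists_mem_weightLE_and_component_ne_zero w hg
  have hμ : 0 < μ := lt_of_not_ge fun hμ => hg_zero (weightLE_mono hμ hgμ)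
  have htop := weightedHomogeneousComponent_aeval hμ hgμ h
  have htop_ne : C h.leadingCoeff * weightedHomogeneousComponent w μ g ^ h.natDegree ≠ 0 :=
    mul_ne_zero (C_ne_zero.2 (Polynomial.leadingCoeff_ne_zero.2 hh)) (pow_ne_zero _ hG)
  have hmμ : m = h.natDegree • μ :=
    (le_of_weightedHomogeneousComponent_ne_zero (aeval_mem_weightLE hμ.le hgμ h) hne).antisymm
      (le_of_weightedHomogeneousComponent_ne_zero hle (htop ▸ htop_ne))
  exact ⟨_, hmμ ▸ htop⟩

end LinearOrder

end WeightFiltration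

section Torus

open MvPolynomial

lemma exists_eval_eq_zero_of_ne_monomial {k σ : Type*} [Field k] [IsAlgClosed k] [Finite σ]
    {G : MvPolynomial σ k} (hG : ∀ v c, G ≠ monomial v c) :
    ∃ x : σ → k, (∀ i, x i ≠ 0) ∧ eval x G = 0 := by
  by_contra! no_zero
  have := Fintype.ofFinite σ
  let allOnes : σ →₀ ℕ := Finsupp.equivFunOnFinite.symm 1
  have vanishes : monomial allOnes 1 ∈ vanishingIdeal k (zeroLocus k (Ideal.span {G})) := by
    intro x hx
    have hGx : eval x G = 0 := by simpa [zeroLocus_span, aeval_eq_eval] using hx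
    obtain ⟨i, hi⟩ : ∃ i, x i = 0 := by
      by_contra! hx0
      exact no_zero x hx0 hGx
    simpa [aeval_monomial, allOnes, Finsupp.prod_fintype, Finset.prod_eq_zero_iff] using ⟨i, hi⟩
  rw [vanishingIdeal_zeroLocus_eq_radical, Ideal.mem_radical_iff] at vanishes
  obtain ⟨N, hN⟩ := vanishes
  rw [Ideal.mem_span_singleton, monomial_pow, one_pow, dvd_monomial_iff_exists one_ne_zero] at hN
  obtain ⟨v, c, -, -, h⟩ := hN
  exact hG v c h

lemma ne_monomial_of_support_C_mul_pow_nontrivial {R σ : Type*} [CommSemiring R] {c : R}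
    {G : MvPolynomial σ R} {D : ℕ} (h : (C c * G ^ D).support.Nontrivial) (v : σ →₀ ℕ) (a : R) :
    G ≠ monomial v a := by
  rintro rfl
  rw [monomial_pow, C_mul_monomial] at h
  exact h.not_subset_singleton support_monomial_subset

lemma eval_pderiv_C_mul_pow_eq_zero {R σ : Type*} [CommSemiring R] {G : MvPolynomial σ R}
    {x : σ → R} (hx : eval x G = 0) (c : R) {D : ℕ} (hD : 2 ≤ D) (i : σ) :
    eval x (pderiv i (C c * G ^ D)) = 0 := by
  have hD' : D - 1 ≠ 0 := by omega
  simp [Derivation.leibniz_pow, hx, hD']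

end Torus

section Edge

variable {𝕜 E : Type*} [Field 𝕜] [AddCommGroup E] [Module 𝕜 E]

lemma vectorSpan_insert_zero (S : Set E) : vectorSpan 𝕜 (insert 0 S) = Submodule.span 𝕜 S := by
  rw [vectorSpan_eq_span_vsub_set_right 𝕜 (Set.mem_insert 0 S)]
  simp only [vsub_eq_sub, sub_zero, Set.image_id', Submodule.span_insert_zero]

lemma exists_notMem_span_singleton {S : Set E} (hS : 2 ≤ Module.finrank 𝕜 (Submodule.span 𝕜 S))
    (q : E) : ∃ s ∈ S, s ∉ Submodule.span 𝕜 {q} := by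
  by_contra! hsub
  have hrank_span := Submodule.finrank_mono (Submodule.span_le.2 hsub)
  have hrank_line := finrank_span_finset_le_card (R := 𝕜) {q}
  rw [Finset.coe_singleton, Set.finrank, Finset.card_singleton] at hrank_line
  omega

variable [LinearOrder 𝕜] [IsStrictOrderedRing 𝕜]

-- The level set `φ = φ p` is rotated about `p` until it first meets a point where `z` is positive.
lemma exists_tilt_le_and_eq {α : Type*} {S : Set α} (hS : S.Finite) {φ z : α → 𝕜} {p : α}
    (hmax : ∀ v ∈ S, φ v ≤ φ p) (hz : ∃ v ∈ S, 0 < z v) :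
    ∃ t, (∀ v ∈ S, φ v + t * z v ≤ φ p) ∧ ∃ s ∈ S, 0 < z s ∧ φ s + t * z s = φ p := by
  obtain ⟨s, ⟨hs, hzs⟩, hmin⟩ := Set.exists_min_image {v ∈ S | 0 < z v}
    (fun v => (φ p - φ v) / z v) (hS.subset (Set.sep_subset _ _)) hz
  refine ⟨(φ p - φ s) / z s, fun v hv => ?_, s, hs, hzs, ?_⟩
  · rcases lt_or_ge 0 (z v) with hzv | hzv
    · linarith [(le_div_iff₀ hzv).1 (hmin v ⟨hv, hzv⟩)]
    · have ht : 0 ≤ (φ p - φ s) / z s := div_nonneg (sub_nonneg.2 (hmax s hs)) hzs.le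
      linarith [hmax v hv, mul_nonpos_of_nonneg_of_nonpos ht hzv]
  · rw [div_mul_cancel₀ _ hzs.ne', add_sub_cancel]

lemma exists_dual_pos_and_le_ker {V : Submodule 𝕜 E} {v : E} (hv : v ∉ V) :
    ∃ φ : Module.Dual 𝕜 E, 0 < φ v ∧ V ≤ LinearMap.ker φ := by
  obtain ⟨φ, hφv, hφ⟩ := V.exists_le_ker_of_notMem hv
  refine ⟨φ v • φ, mul_self_pos.2 hφv, fun x hx => ?_⟩
  simp [LinearMap.mem_ker.1 (hφ hx)]

theorem exists_dual_le_and_eq_nontrivial {S : Set E} (hfin : S.Finite)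
    (hS : 2 ≤ Module.finrank 𝕜 (Submodule.span 𝕜 S)) :
    ∃ (φ : Module.Dual 𝕜 E) (m : 𝕜),
      0 < m ∧ (∀ v ∈ S, φ v ≤ m) ∧ {v ∈ S | φ v = m}.Nontrivial := by
  obtain ⟨s₀, hs₀, hs₀_ne⟩ := exists_notMem_span_singleton hS 0
  obtain ⟨φ, hφs₀, -⟩ := exists_dual_pos_and_le_ker hs₀_ne
  obtain ⟨p, hp, hmax⟩ := Set.exists_max_image S φ hfin ⟨s₀, hs₀⟩
  obtain ⟨s₁, hs₁, hs₁_notMem⟩ := exists_notMem_span_singleton hS p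
  obtain ⟨z, hzs₁, hz⟩ := exists_dual_pos_and_le_ker hs₁_notMem
  have hzp : z p = 0 := hz (Submodule.mem_span_singleton_self p)
  obtain ⟨t, hle, s, hs, hzs, heq⟩ := exists_tilt_le_and_eq hfin hmax ⟨s₁, hs₁, hzs₁⟩
  refine ⟨φ + t • z, φ p, hφs₀.trans_le (hmax s₀ hs₀), hle, p, ⟨hp, ?_⟩, s, ⟨hs, heq⟩, ?_⟩
  · simp [hzp]
  · rintro rfl
    exact hzs.ne' hzp

end Edge

section NewtonPolyhedron

open MvPolynomial
open Finsupp (weight)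

variable {n : ℕ} {f : MvPolynomial (Fin n) ℂ} {w : Fin n → ℝ} {m : ℝ}

lemma dotR_neg_left (u v : Fin n → ℝ) : dotR (-u) v = -dotR u v :=
  neg_dotProduct u v

lemma dotR_natCast (w : Fin n → ℝ) (d : Fin n →₀ ℕ) :
    dotR w (fun i => (d i : ℝ)) = weight w d := by
  simp only [dotR, Finsupp.weight_eq_sum, nsmul_eq_mul, mul_comm]

lemma natCast_mem_NPinf {d : Fin n →₀ ℕ} (hd : d ∈ f.support) : (fun i => (d i : ℝ)) ∈ NPinf f :=
  subset_convexHull ℝ _ (.inr ⟨d, mem_support_iff.1 hd, rfl⟩)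

lemma finite_realSupp (f : MvPolynomial (Fin n) ℂ) : (realSupp f).Finite :=
  (f.support.finite_toSet.subset fun _ => mem_support_iff.2).image _

lemma setDim_NPinf (f : MvPolynomial (Fin n) ℂ) :
    setDim (NPinf f) = Module.finrank ℝ (Submodule.span ℝ (realSupp f)) := by
  rw [setDim, NPinf, affineSpan_convexHull, direction_affineSpan, Set.singleton_union,
    vectorSpan_insert_zero]

lemma exists_weight_component_support_nontrivial (hdim : 2 ≤ setDim (NPinf f)) :
    ∃ (w : Fin n → ℝ) (m : ℝ), 0 < m ∧ f ∈ weightLE ℂ w m ∧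
      (weightedHomogeneousComponent w m f).support.Nontrivial := by
  obtain ⟨φ, m, hm, hle, hnontrivial⟩ :=
    exists_dual_le_and_eq_nontrivial (finite_realSupp f) (setDim_NPinf f ▸ hdim)
  obtain ⟨w, rfl⟩ := (dotProductEquiv ℝ (Fin n)).surjective φ
  obtain ⟨_, ⟨⟨p, hp, rfl⟩, hpm⟩, _, ⟨⟨s, hs, rfl⟩, hsm⟩, hps⟩ := hnontrivial
  have hweight (d : Fin n →₀ ℕ) : dotProductEquiv ℝ (Fin n) w (fun i => (d i : ℝ)) = weight w d :=
    dotR_natCast w d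
  refine ⟨w, m, hm, mem_weightLE.2 fun d hd => ?_, ?_⟩
  · exact (hweight d).ge.trans (hle _ ⟨d, mem_support_iff.1 hd, rfl⟩)
  · rw [support_weightedHomogeneousComponent]
    exact ⟨p, by simpa using ⟨hp, (hweight p).symm.trans hpm⟩, s,
      by simpa using ⟨hs, (hweight s).symm.trans hsm⟩, fun h => hps (by rw [h])⟩

lemma dotR_le_of_mem_NPinf (hm : 0 ≤ m) (hle : f ∈ weightLE ℂ w m) {v : Fin n → ℝ}
    (hv : v ∈ NPinf f) : dotR w v ≤ m := by
  have hconvex : Convex ℝ {v | dotR w v ≤ m} :=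
    convex_halfSpace_le (dotProductEquiv ℝ (Fin n) w).isLinear m
  refine convexHull_min ?_ hconvex hv
  rintro _ (rfl | ⟨d, hd, rfl⟩)
  · exact (dotProduct_zero w).trans_le hm
  · exact (dotR_natCast w d).trans_le (hle (mem_support_iff.2 hd))

lemma suppFace_neg (hm : 0 ≤ m) (hle : f ∈ weightLE ℂ w m)
    (hne : weightedHomogeneousComponent w m f ≠ 0) :
    suppFace f (-w) = {v ∈ NPinf f | dotR w v = m} := by
  obtain ⟨p, hp, hpm⟩ : ∃ p ∈ f.support, weight w p = m := by
    by_contra! h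
    exact hne (weightedHomogeneousComponent_eq_zero' m f h)
  ext v
  simp only [suppFace, dotR_neg_left, neg_le_neg_iff, Set.mem_sep_iff]
  refine and_congr_right fun hv => ⟨fun hmax => ?_, fun hvm u hu => ?_⟩
  · have hpv := hmax _ (natCast_mem_NPinf hp)
    rw [dotR_natCast, hpm] at hpv
    exact (dotR_le_of_mem_NPinf hm hle hv).antisymm hpv
  · exact hvm ▸ dotR_le_of_mem_NPinf hm hle hu

lemma zero_notMem_suppFace_neg (hm : 0 < m) (hle : f ∈ weightLE ℂ w m)
    (hne : weightedHomogeneousComponent w m f ≠ 0) : 0 ∉ suppFace f (-w) := by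
  rw [suppFace_neg hm.le hle hne]
  rintro ⟨-, h⟩
  exact hm.ne ((dotProduct_zero w).symm.trans h)

lemma facePart_suppFace_neg (hm : 0 ≤ m) (hle : f ∈ weightLE ℂ w m)
    (hne : weightedHomogeneousComponent w m f ≠ 0) :
    facePart f (suppFace f (-w)) = weightedHomogeneousComponent w m f := by
  rw [weightedHomogeneousComponent_apply, facePart, Finset.sum_filter, suppFace_neg hm hle hne]
  refine Finset.sum_congr rfl fun d hd => ?_
  simp only [Set.mem_sep_iff, natCast_mem_NPinf hd, true_and, dotR_natCast]

theorem no_composition_general (f : MvPolynomial (Fin n) ℂ)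
    (hdim : 2 ≤ setDim (NPinf f)) (hnd : NondegAtInfty f) :
    ¬ ∃ (hhat : Polynomial ℂ) (g : MvPolynomial (Fin n) ℂ),
        2 ≤ hhat.natDegree ∧ f = Polynomial.aeval g hhat := by
  rintro ⟨h, g, hdeg, rfl⟩
  obtain ⟨w, m, hm, hle, hedge⟩ := exists_weight_component_support_nontrivial hdim
  have hne := support_nonempty.1 hedge.nonempty
  obtain ⟨G, hG⟩ := exists_weightedHomogeneousComponent_aeval_eq_C_mul_pow hm hle hne
  obtain ⟨x, hx, hGx⟩ := exists_eval_eq_zero_of_ne_monomial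
    (ne_monomial_of_support_C_mul_pow_nontrivial (hG ▸ hedge))
  have hsmooth := hnd _ ⟨-w, rfl⟩ (zero_notMem_suppFace_neg hm hle hne) x hx
  rw [facePart_suppFace_neg hm.le hle hne, hG] at hsmooth
  have hzero : eval x (C h.leadingCoeff * G ^ h.natDegree) = 0 := by
    rw [eval_mul, eval_pow, hGx, zero_pow (by omega), mul_zero]
  obtain ⟨i, hi⟩ := hsmooth hzero
  exact hi (eval_pderiv_C_mul_pow_eq_zero hGx _ hdeg i)

end NewtonPolyhedron

/-- If `f ∈ ℂ[x,y]` is non-degenerate at infinity and `dim Γ_∞(f) = 2`, then `f` admits no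
decomposition `f = ĥ ∘ g` with `ĥ ∈ ℂ[t]` of degree `≥ 2` and `g ∈ ℂ[x,y]`. -/
theorem no_composition (f : MvPolynomial (Fin 2) ℂ)
    (hdim : setDim (NPinf f) = 2) (hnd : NondegAtInfty f) :
    ¬ ∃ (hhat : Polynomial ℂ) (g : MvPolynomial (Fin 2) ℂ),
        2 ≤ hhat.natDegree ∧ f = Polynomial.aeval g hhat := by
  exact no_composition_general f hdim.ge hnd
end
end

section
/- Let g ∈ ℂ[x,y] be a non-constant polynomial, ĥ ∈ ℂ[t] a one-variable polynomial of degree m ≥ 1, and f = ĥ ∘ g ∈ ℂ[x,y] the polynomial obtained by substituting g into ĥ. Then Γ_∞(f) = m · Γ_∞(g), where m · Γ_∞(g) = {m·w : w ∈ Γ_∞(g)}. -/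
open scoped Classical

noncomputable section

/-!
The inclusion `Γ_∞(ĥ ∘ g) ⊆ m · Γ_∞(g)` holds because the exponents of `g ^ k` lie in `k · Γ_∞(g)`,
and these dilates increase with `k` since `Γ_∞(g)` is convex and contains `0`. For the converse,
`Γ_∞(g)` is the convex hull of its vertices, and a vertex `e ≠ 0` is an exponent of `g`. As `e` is
extreme, `m e` is a sum of `m` exponents of `g` only as `e + ⋯ + e`, and it does not lie in
`k · Γ_∞(g)` for `k < m`. So no cancellation happens at `m e`: the coefficient of `ĥ ∘ g` there is
`ĥ_m · (g_e) ^ m ≠ 0`.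
-/

section ConvexSets

open scoped Pointwise

variable {𝕜 E : Type*} [Field 𝕜] [LinearOrder 𝕜] [IsStrictOrderedRing 𝕜]
  [AddCommGroup E] [Module 𝕜 E] {P : Set E} {e x y : E} {a b : 𝕜}

theorem smul_subset_smul_of_convex_of_zero_mem (hP : Convex 𝕜 P) (h0 : 0 ∈ P) (ha : 0 ≤ a)
    (hab : a ≤ b) : a • P ⊆ b • P := by
  rw [← add_sub_cancel a b, hP.add_smul ha (sub_nonneg.2 hab)]
  exact Set.subset_add_left _ (Set.zero_mem_smul_set h0)

theorem eq_and_eq_of_mem_extremePoints_of_smul_add_smul_eq (he : e ∈ P.extremePoints 𝕜)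
    (ha : 0 < a) (hb : 0 < b) (hx : x ∈ P) (hy : y ∈ P) (h : a • x + b • y = (a + b) • e) :
    x = e ∧ y = e := by
  have hab : a + b ≠ 0 := (add_pos ha hb).ne'
  refine (mem_extremePoints.1 he).2 x hx y hy
    (mem_openSegment_iff_div.2 ⟨a, b, ha, hb, ?_⟩)
  rw [div_eq_inv_mul, div_eq_inv_mul, mul_smul, mul_smul, ← smul_add, h, inv_smul_smul₀ hab]

theorem eq_smul_and_eq_smul_of_mem_extremePoints_of_add_eq (he : e ∈ P.extremePoints 𝕜)
    (ha : 0 ≤ a) (hb : 0 ≤ b) (hx : x ∈ a • P) (hy : y ∈ b • P) (h : x + y = (a + b) • e) :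
    x = a • e ∧ y = b • e := by
  obtain ⟨p, hp, rfl⟩ := hx
  obtain ⟨q, hq, rfl⟩ := hy
  rcases ha.eq_or_lt with rfl | ha
  · simpa using h
  rcases hb.eq_or_lt with rfl | hb
  · simpa using h
  obtain ⟨rfl, rfl⟩ := eq_and_eq_of_mem_extremePoints_of_smul_add_smul_eq he ha hb hp hq h
  exact ⟨rfl, rfl⟩

theorem smul_notMem_smul_set_of_mem_extremePoints (he : e ∈ P.extremePoints 𝕜) (h0 : 0 ∈ P)
    (he0 : e ≠ 0) (ha : 0 ≤ a) (hab : a < b) : b • e ∉ a • P := by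
  intro hmem
  have hpos : 0 < b - a := sub_pos.2 hab
  have hzero : (0 : E) = (b - a) • e :=
    (eq_smul_and_eq_smul_of_mem_extremePoints_of_add_eq he ha hpos.le hmem
      (Set.zero_mem_smul_set h0) (by rw [add_zero, add_sub_cancel])).2
  exact smul_ne_zero hpos.ne' he0 hzero.symm

end ConvexSets

theorem convexHull_extremePoints_convexHull {E : Type*} [AddCommGroup E] [Module ℝ E]
    [TopologicalSpace E] [T2Space E] [IsTopologicalAddGroup E] [ContinuousSMul ℝ E]
    [LocallyConvexSpace ℝ E] {s : Set E} (hs : s.Finite) :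
    convexHull ℝ ((convexHull ℝ s).extremePoints ℝ) = convexHull ℝ s := by
  have hfin : ((convexHull ℝ s).extremePoints ℝ).Finite :=
    hs.subset extremePoints_convexHull_subset
  rw [← (hfin.isClosed_convexHull ℝ).closure_eq]
  exact closure_convexHull_extremePoints (hs.isCompact_convexHull ℝ) (convex_convexHull ℝ s)

/-- The exponent of a monomial, regarded as a point of `ℝ^σ`. -/
def exponentVector {σ : Type*} : (σ →₀ ℕ) →+ (σ → ℝ) where
  toFun v i := v i
  map_zero' := by ext; simp
  map_add' v w := by ext; simp

theorem exponentVector_injective {σ : Type*} :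
    Function.Injective (exponentVector : (σ →₀ ℕ) →+ (σ → ℝ)) :=
  fun _ _ h => Finsupp.ext fun i => Nat.cast_injective (congrFun h i)

section NewtonPolyhedron

open MvPolynomial
open scoped Pointwise

variable {σ R : Type*} [CommSemiring R]

/-- The Newton polyhedron at infinity of a polynomial in an arbitrary family of variables over
an arbitrary commutative semiring; `NPinf` is the case of `ℂ[x₁, …, xₙ]`. -/
def newtonPolyhedron (g : MvPolynomial σ R) : Set (σ → ℝ) :=
  convexHull ℝ (insert 0 (exponentVector '' g.support))

theorem NPinf_eq_newtonPolyhedron {n : ℕ} (g : MvPolynomial (Fin n) ℂ) :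
    NPinf g = newtonPolyhedron g := by
  have hsupp : {v | coeff v g ≠ 0} = (g.support : Set (Fin n →₀ ℕ)) := by
    ext v
    simp
  rw [NPinf, realSupp, hsupp]
  rfl

namespace newtonPolyhedron

variable (g : MvPolynomial σ R)

theorem convex : Convex ℝ (newtonPolyhedron g) :=
  convex_convexHull ℝ _

theorem zero_mem : 0 ∈ newtonPolyhedron g :=
  subset_convexHull ℝ _ (Set.mem_insert _ _)

theorem convexHull_extremePoints :
    convexHull ℝ ((newtonPolyhedron g).extremePoints ℝ) = newtonPolyhedron g :=
  convexHull_extremePoints_convexHull ((g.support.finite_toSet.image _).insert 0)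

theorem extremePoints_subset :
    (newtonPolyhedron g).extremePoints ℝ ⊆ insert 0 (exponentVector '' g.support) :=
  extremePoints_convexHull_subset

variable {g}

theorem exponentVector_mem {v : σ →₀ ℕ} (hv : v ∈ g.support) :
    exponentVector v ∈ newtonPolyhedron g :=
  subset_convexHull ℝ _ (Set.mem_insert_of_mem _ (Set.mem_image_of_mem _ hv))

theorem exponentVector_mem_smul_of_mem_support_pow {k : ℕ} {v : σ →₀ ℕ}
    (hv : v ∈ (g ^ k).support) : exponentVector v ∈ (k : ℝ) • newtonPolyhedron g := by
  induction k generalizing v with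
  | zero =>
    have hv0 : v = 0 := by
      by_contra hne
      exact mem_support_iff.1 hv (by rw [pow_zero, coeff_one, if_neg (Ne.symm hne)])
    rw [hv0, map_zero]
    exact Set.zero_mem_smul_set (zero_mem g)
  | succ k ih =>
    obtain ⟨a, ha, b, hb, rfl⟩ := Finset.mem_add.1 (support_mul _ _ (pow_succ g k ▸ hv))
    rw [map_add, Nat.cast_succ, (convex g).add_smul k.cast_nonneg zero_le_one, one_smul]
    exact Set.add_mem_add (ih ha) (exponentVector_mem hb)

section ExtremePoint

variable {e : σ →₀ ℕ} (he : exponentVector e ∈ (newtonPolyhedron g).extremePoints ℝ)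
include he

theorem uniqueAdd_support_pow (k : ℕ) : UniqueAdd (g ^ k).support g.support (k • e) e := by
  intro a b ha hb hab
  have hsum : exponentVector a + exponentVector b = ((k : ℝ) + 1) • exponentVector e := by
    rw [← map_add, hab, map_add, map_nsmul, add_smul, one_smul, Nat.cast_smul_eq_nsmul]
  obtain ⟨hae, hbe⟩ := eq_smul_and_eq_smul_of_mem_extremePoints_of_add_eq he k.cast_nonneg
    zero_le_one (exponentVector_mem_smul_of_mem_support_pow ha)
    (by rw [one_smul]; exact exponentVector_mem hb) hsum
  rw [Nat.cast_smul_eq_nsmul, ← map_nsmul] at hae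
  rw [one_smul] at hbe
  exact ⟨exponentVector_injective hae, exponentVector_injective hbe⟩

theorem coeff_nsmul_pow (k : ℕ) : coeff (k • e) (g ^ k) = coeff e g ^ k := by
  induction k with
  | zero => simp
  | succ k ih =>
    rw [pow_succ, pow_succ, succ_nsmul, ← ih]
    exact AddMonoidAlgebra.coeff_mul_add_of_uniqueAdd (uniqueAdd_support_pow he k)

variable (he0 : e ≠ 0)
include he0

theorem coeff_nsmul_pow_eq_zero_of_lt {k m : ℕ} (hkm : k < m) : coeff (m • e) (g ^ k) = 0 := by
  by_contra hne
  have hmem := exponentVector_mem_smul_of_mem_support_pow (mem_support_iff.2 hne)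
  rw [map_nsmul, ← Nat.cast_smul_eq_nsmul ℝ] at hmem
  exact smul_notMem_smul_set_of_mem_extremePoints he (zero_mem g)
    ((map_ne_zero_iff _ exponentVector_injective).2 he0) k.cast_nonneg (Nat.cast_lt.2 hkm) hmem

theorem coeff_nsmul_aeval (p : Polynomial R) :
    coeff (p.natDegree • e) (Polynomial.aeval g p) =
      p.leadingCoeff * coeff e g ^ p.natDegree := by
  have hlower : ∀ k ∈ Finset.range p.natDegree,
      coeff (p.natDegree • e) (p.coeff k • g ^ k) = 0 := fun k hk => by
    rw [coeff_smul, coeff_nsmul_pow_eq_zero_of_lt he he0 (Finset.mem_range.1 hk), smul_zero]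
  rw [Polynomial.aeval_eq_sum_range, coeff_sum, Finset.sum_range_succ,
    Finset.sum_eq_zero hlower, zero_add, coeff_smul, coeff_nsmul_pow he, smul_eq_mul,
    Polynomial.leadingCoeff]

end ExtremePoint

theorem aeval_subset_natDegree_smul (g : MvPolynomial σ R) (p : Polynomial R) :
    newtonPolyhedron (Polynomial.aeval g p) ⊆ (p.natDegree : ℝ) • newtonPolyhedron g := by
  refine convexHull_min ?_ ((convex g).smul _)
  rintro _ (rfl | ⟨v, hv, rfl⟩)
  · exact Set.zero_mem_smul_set (zero_mem g)
  rw [Finset.mem_coe, mem_support_iff, Polynomial.aeval_eq_sum_range, coeff_sum] at hv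
  obtain ⟨k, hk, hne⟩ := Finset.exists_ne_zero_of_sum_ne_zero hv
  rw [coeff_smul] at hne
  exact smul_subset_smul_of_convex_of_zero_mem (convex g) (zero_mem g) k.cast_nonneg
    (Nat.cast_le.2 (Finset.mem_range_succ_iff.1 hk))
    (exponentVector_mem_smul_of_mem_support_pow (mem_support_iff.2 (right_ne_zero_of_smul hne)))

theorem natDegree_smul_subset_aeval [NoZeroDivisors R] (g : MvPolynomial σ R)
    {p : Polynomial R} (hp : p ≠ 0) :
    (p.natDegree : ℝ) • newtonPolyhedron g ⊆ newtonPolyhedron (Polynomial.aeval g p) := by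
  rw [← convexHull_extremePoints g, ← convexHull_smul]
  refine convexHull_min ?_ (convex _)
  rintro _ ⟨x, hx, rfl⟩
  change (p.natDegree : ℝ) • x ∈ _
  rcases eq_or_ne x 0 with rfl | hx0
  · rw [smul_zero]
    exact zero_mem _
  obtain ⟨e, heg, rfl⟩ := (extremePoints_subset g hx).resolve_left hx0
  have he0 : e ≠ 0 := (map_ne_zero_iff _ exponentVector_injective).1 hx0
  rw [Nat.cast_smul_eq_nsmul, ← map_nsmul]
  apply exponentVector_mem
  rw [mem_support_iff, coeff_nsmul_aeval hx he0]
  exact mul_ne_zero (Polynomial.leadingCoeff_ne_zero.2 hp)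
    (pow_ne_zero _ (mem_support_iff.1 heg))

end newtonPolyhedron

theorem NPinf_comp_general [NoZeroDivisors R] (g : MvPolynomial σ R) {p : Polynomial R}
    (hp : p ≠ 0) :
    newtonPolyhedron (Polynomial.aeval g p) = (p.natDegree : ℝ) • newtonPolyhedron g :=
  (newtonPolyhedron.aeval_subset_natDegree_smul g p).antisymm
    (newtonPolyhedron.natDegree_smul_subset_aeval g hp)

end NewtonPolyhedron

open scoped Pointwise in
/-- If `g ∈ ℂ[x,y]` is non-constant, `ĥ ∈ ℂ[t]` has degree `m ≥ 1` and `f = ĥ ∘ g`, then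
`Γ_∞(f) = m · Γ_∞(g)`. -/
theorem NPinf_comp (g : MvPolynomial (Fin 2) ℂ) (hg : 0 < g.totalDegree)
    (hhat : Polynomial ℂ) (m : ℕ) (hm : 1 ≤ m) (hdeg : hhat.natDegree = m)
    (f : MvPolynomial (Fin 2) ℂ) (hf : f = Polynomial.aeval g hhat) :
    NPinf f = (m : ℝ) • NPinf g := by
  subst hf hdeg
  rw [NPinf_eq_newtonPolyhedron, NPinf_eq_newtonPolyhedron]
  exact NPinf_comp_general g (Polynomial.ne_zero_of_natDegree_gt hm)
end
end
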